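/- For every E ∈ ℝ and every ε > 0, there exists K = K(E,ε) such that for every integer k > K and every x ∈ ℝ, |P_k(x,E)| < e^{(L(E)+ε)k}. -/

import Mathlib

open scoped Real

/-- The quasi-periodic potential `v(x) = 2λcos(2πx)/(1 - αcos(2πx))`. -/
noncomputable def potV (α lam : ℝ) (x : ℝ) : ℝ :=
  2 * lam * Real.cos (2 * Real.pi * x) / (1 - α * Real.cos (2 * Real.pi * x))

/-- One-step transfer matrix `A(x,z) = [[z - V x, -1],[1,0]]`. -/
noncomputable def tMat (V : ℝ → ℝ) (x : ℝ) (z : ℂ) : Matrix (Fin 2) (Fin 2) ℂ :=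
  !![z - (V x : ℝ), -1; 1, 0]

/-- The `n`-step transfer matrix `A_n(x,z) = A(x+(n-1)b,z) ⋯ A(x+b,z) A(x,z)`. -/
noncomputable def tProd (V : ℝ → ℝ) (b : ℝ) (n : ℕ) (x : ℝ) (z : ℂ) :
    Matrix (Fin 2) (Fin 2) ℂ :=
  (((List.range n).reverse).map (fun j => tMat V (x + (j : ℝ) * b) z)).prod

/-- The operator norm of a 2×2 complex matrix, acting on the Euclidean space `ℂ²`. -/
noncomputable def opNorm2 (M : Matrix (Fin 2) (Fin 2) ℂ) : ℝ :=
  ‖Matrix.toEuclideanCLM (𝕜 := ℂ) M‖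

/-- The Lyapunov exponent `L(z) = lim_n (1/n)∫₀¹ log‖A_n(x,z)‖ dx`; the limit exists and
equals `inf_{n ≥ 1} (1/n)∫₀¹ log‖A_n(x,z)‖ dx` by subadditivity, so we take that as the
definition. -/
noncomputable def lyap (V : ℝ → ℝ) (b : ℝ) (z : ℂ) : ℝ :=
  ⨅ n : ℕ+, ((n : ℝ))⁻¹ * ∫ x in (0:ℝ)..(1:ℝ), Real.log (opNorm2 (tProd V b n x z))

/-- The `k×k` tridiagonal matrix with diagonal entries `E - V(x+jb)`, `j = 0,…,k-1`, and
entries `-1` on the two adjacent diagonals. -/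
noncomputable def Pmat (V : ℝ → ℝ) (b : ℝ) (k : ℕ) (x : ℝ) (E : ℝ) :
    Matrix (Fin k) (Fin k) ℝ :=
  fun i j =>
    if i = j then E - V (x + (i : ℝ) * b)
    else if (i : ℤ) = (j : ℤ) + 1 ∨ (j : ℤ) = (i : ℤ) + 1 then -1 else 0

/-- `P_k(x,E)`, the determinant of the box restriction `(H - E)|_{[0,k-1]}`. -/
noncomputable def Pdet (V : ℝ → ℝ) (b : ℝ) (k : ℕ) (x : ℝ) (E : ℝ) : ℝ :=
  (Pmat V b k x E).det


def Good (c : UnitAddCircle) (G : C(UnitAddCircle, ℂ)) : Prop :=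
  ∀ δ : ℝ, 0 < δ → ∃ N0 : ℕ, ∀ N : ℕ, N0 ≤ N → ∀ x : UnitAddCircle,
    ‖(∑ i ∈ Finset.range N, G (x + i • c)) - N * ∫ t in (0:ℝ)..1, G (t : UnitAddCircle)‖ ≤ δ * N

lemma ii (G : C(UnitAddCircle, ℂ)) (a b : ℝ) :
    IntervalIntegrable (fun t : ℝ => G (t : UnitAddCircle)) MeasureTheory.volume a b :=
  (G.continuous.comp (AddCircle.continuous_mk' 1)).intervalIntegrable _ _

lemma Good.add {c} {F G : C(UnitAddCircle, ℂ)} (hF : Good c F) (hG : Good c G) :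
    Good c (F + G) := by
  intro δ hδ
  obtain ⟨N1, h1⟩ := hF (δ/2) (by positivity)
  obtain ⟨N2, h2⟩ := hG (δ/2) (by positivity)
  refine ⟨max N1 N2, fun N hN x => ?_⟩
  have a1 := h1 N (le_trans (le_max_left _ _) hN) x
  have a2 := h2 N (le_trans (le_max_right _ _) hN) x
  simp only [ContinuousMap.add_apply]
  rw [intervalIntegral.integral_add (ii F _ _) (ii G _ _), Finset.sum_add_distrib]
  calc _ = ‖((∑ i ∈ Finset.range N, F (x + i • c)) - N * ∫ t in (0:ℝ)..1, F (t : UnitAddCircle)) +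
      ((∑ i ∈ Finset.range N, G (x + i • c)) - N * ∫ t in (0:ℝ)..1, G (t : UnitAddCircle))‖ := by
        congr 1; ring
    _ ≤ _ := norm_add_le _ _
    _ ≤ _ := by linarith

lemma Good.smul {c} {G : C(UnitAddCircle, ℂ)} (a : ℂ) (hG : Good c G) :
    Good c (a • G) := by
  intro δ hδ
  obtain ⟨N2, h2⟩ := hG (δ/(‖a‖+1)) (by positivity)
  refine ⟨N2, fun N hN x => ?_⟩
  have a2 := h2 N hN x
  simp only [ContinuousMap.smul_apply, smul_eq_mul]
  rw [intervalIntegral.integral_const_mul, ← Finset.mul_sum]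
  calc _ = ‖a * ((∑ i ∈ Finset.range N, G (x + i • c)) - N * ∫ t in (0:ℝ)..1, G (t : UnitAddCircle))‖ := by
        congr 1; ring
    _ = ‖a‖ * ‖((∑ i ∈ Finset.range N, G (x + i • c)) - N * ∫ t in (0:ℝ)..1, G (t : UnitAddCircle))‖ := norm_mul _ _
    _ ≤ (‖a‖+1) * (δ/(‖a‖+1) * N) := by gcongr; linarith
    _ = _ := by field_simp

lemma Good.zero {c} : Good c 0 := by
  intro δ hδ
  refine ⟨0, fun N _ x => ?_⟩
  simp; positivity

lemma int_fourier (n : ℤ) (hn : n ≠ 0) : ∫ t in (0:ℝ)..1, (fourier n (t : UnitAddCircle) : ℂ) = 0 := by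
  have h : (2 * π * Complex.I * n : ℂ) ≠ 0 := by
    simp [hn, Real.pi_ne_zero, Complex.I_ne_zero]
  have : ∀ t : ℝ, (fourier n (t : UnitAddCircle) : ℂ) = Complex.exp ((2 * π * Complex.I * n) * t) := by
    intro t; rw [fourier_coe_apply]; simp
  simp_rw [this]
  rw [integral_exp_mul_complex h]
  have : Complex.exp ((2 * π * Complex.I * n) * (1:ℝ)) = 1 := by
    rw [Complex.exp_eq_one_iff]; exact ⟨n, by push_cast; ring⟩
  rw [this]; simp

lemma Good.fourier {c : ℝ} (hc : Irrational c) (n : ℤ) : Good (c : UnitAddCircle) (fourier n) := by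
  intro δ hδ
  by_cases hn : n = 0
  · subst hn
    refine ⟨0, fun N _ x => ?_⟩
    simp; positivity
  set w : ℂ := _root_.fourier n (c : UnitAddCircle) with hw
  have hw1 : w ≠ 1 := by
    rw [hw, fourier_coe_apply]
    intro h
    rw [Complex.exp_eq_one_iff] at h
    obtain ⟨m, hm⟩ := h
    have h2 : (n : ℂ) * c = m := by
      have : (2 * π * Complex.I : ℂ) ≠ 0 := by simp [Real.pi_ne_zero, Complex.I_ne_zero]
      apply mul_left_cancel₀ this
      rw [mul_comm _ (m:ℂ), ← hm]; push_cast; ring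
    have h3 : (n : ℝ) * c = m := by exact_mod_cast h2
    exact (hc.intCast_mul hn).ne_int m h3
  have hwn : ‖w‖ = 1 := by rw [hw, fourier_apply]; exact Circle.norm_coe _
  have key : ∀ (x : UnitAddCircle) (i : ℕ), (_root_.fourier n (x + i • (c : UnitAddCircle)) : ℂ)
      = _root_.fourier n x * w ^ i := by
    intro x i
    rw [hw]
    simp only [fourier_apply, smul_add, AddCircle.toCircle_add, Circle.coe_mul]
    rw [smul_comm, AddCircle.toCircle_nsmul]
    simp
  have hp : 0 < ‖w - 1‖ := norm_pos_iff.2 (sub_ne_zero.2 hw1)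
  obtain ⟨N0, hN0⟩ := exists_nat_ge (2 / ‖w - 1‖ / δ)
  refine ⟨N0, fun N hN x => ?_⟩
  rw [int_fourier n hn]
  simp_rw [key]
  rw [← Finset.mul_sum, geom_sum_eq hw1, mul_zero, sub_zero, norm_mul, norm_div]
  have h1 : ‖(_root_.fourier n x : ℂ)‖ = 1 := by rw [fourier_apply]; exact Circle.norm_coe _
  rw [h1, one_mul]
  have h2 : ‖w ^ N - 1‖ ≤ 2 := by
    refine (norm_sub_le _ _).trans ?_
    rw [norm_pow, hwn]; norm_num
  calc _ ≤ 2 / ‖w - 1‖ := by gcongr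
    _ ≤ δ * N0 := by rw [div_le_iff₀ hδ] at hN0; linarith
    _ ≤ _ := by gcongr

lemma Good.all {c : ℝ} (hc : Irrational c) (G : C(UnitAddCircle, ℂ)) : Good (c : UnitAddCircle) G := by
  intro δ hδ
  have hG : G ∈ (Submodule.span ℂ (Set.range (@_root_.fourier 1))).topologicalClosure := by
    rw [span_fourier_closure_eq_top]; trivial
  have hG' : G ∈ closure ((Submodule.span ℂ (Set.range (@_root_.fourier 1)) : Submodule ℂ C(UnitAddCircle, ℂ)) : Set C(UnitAddCircle, ℂ)) := hG
  obtain ⟨F, hF, hd⟩ := Metric.mem_closure_iff.1 hG' (δ/3) (by positivity)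
  have hgood : Good (c : UnitAddCircle) F := by
    clear hd
    induction hF using Submodule.span_induction with
    | mem x h => obtain ⟨n, rfl⟩ := h; exact Good.fourier hc n
    | zero => exact Good.zero
    | add x y _ _ h1 h2 => exact h1.add h2
    | smul a x _ h => exact h.smul a
  obtain ⟨N0, h0⟩ := hgood (δ/3) (by positivity)
  refine ⟨N0, fun N hN x => ?_⟩
  have h1 := h0 N hN x
  have hp : ∀ t, ‖G t - F t‖ ≤ δ/3 := fun t => by
    rw [← dist_eq_norm]
    exact (ContinuousMap.dist_apply_le_dist t).trans hd.le
  have h2 : ‖∑ i ∈ Finset.range N, (G (x + i • (c : UnitAddCircle)) - F (x + i • (c : UnitAddCircle)))‖ ≤ N * (δ/3) := by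
    refine (norm_sum_le_of_le _ (fun i _ => hp _)).trans ?_
    simp
  have h3 : ‖∫ t in (0:ℝ)..1, (G (t : UnitAddCircle) - F (t : UnitAddCircle))‖ ≤ δ/3 := by
    have := intervalIntegral.norm_integral_le_of_norm_le_const (a := (0:ℝ)) (b := 1)
      (f := fun t : ℝ => G (t : UnitAddCircle) - F (t : UnitAddCircle)) (C := δ/3) (fun t _ => hp _)
    simpa using this
  rw [intervalIntegral.integral_sub (ii G _ _) (ii F _ _)] at h3
  rw [Finset.sum_sub_distrib] at h2
  have h4 : ‖(N : ℂ) * ((∫ t in (0:ℝ)..1, G (t : UnitAddCircle)) - ∫ t in (0:ℝ)..1, F (t : UnitAddCircle))‖ ≤ N * (δ/3) := by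
    rw [norm_mul, Complex.norm_natCast]
    gcongr
  set SG := ∑ i ∈ Finset.range N, G (x + i • (c : UnitAddCircle))
  set SF := ∑ i ∈ Finset.range N, F (x + i • (c : UnitAddCircle))
  set IG := ∫ t in (0:ℝ)..1, G (t : UnitAddCircle)
  set IF := ∫ t in (0:ℝ)..1, F (t : UnitAddCircle)
  calc ‖SG - N * IG‖ = ‖(SF - N * IF) + (SG - SF) - N * (IG - IF)‖ := by congr 1; ring
    _ ≤ ‖SF - N * IF‖ + ‖SG - SF‖ + ‖N * (IG - IF)‖ :=
        (norm_sub_le _ _).trans (by gcongr; exact norm_add_le _ _)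
    _ ≤ _ := by linarith

lemma weyl_real {c : ℝ} (hc : Irrational c) (f : ℝ → ℝ) (hf : Continuous f)
    (hper : Function.Periodic f 1) (δ : ℝ) (hδ : 0 < δ) :
    ∃ N0 : ℕ, ∀ N : ℕ, N0 ≤ N → ∀ x : ℝ,
      ∑ i ∈ Finset.range N, f (x + i * c) ≤ N * ((∫ t in (0:ℝ)..1, f t) + δ) := by
  have hper' : Function.Periodic (fun t => (f t : ℂ)) 1 := fun t => by simp [hper t]
  have hcont : Continuous (hper'.lift : UnitAddCircle → ℂ) :=
    continuous_coinduced_dom.2 (Complex.continuous_ofReal.comp hf)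
  obtain ⟨N0, h0⟩ := Good.all hc ⟨_, hcont⟩ δ hδ
  refine ⟨N0, fun N hN x => ?_⟩
  have h1 := h0 N hN (x : UnitAddCircle)
  have e1 : ∀ i : ℕ, hper'.lift ((x : UnitAddCircle) + i • (c : UnitAddCircle)) = ((f (x + i * c) : ℝ) : ℂ) := by
    intro i
    have : ((x : UnitAddCircle) + i • (c : UnitAddCircle)) = ((x + i * c : ℝ) : UnitAddCircle) := by
      rw [← nsmul_eq_mul]; simp
    rw [this]; rfl
  have e2 : ∀ t : ℝ, hper'.lift ((t : ℝ) : UnitAddCircle) = ((f t : ℝ) : ℂ) := fun t => rfl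
  simp only [ContinuousMap.coe_mk, e1, e2] at h1
  rw [intervalIntegral.integral_ofReal] at h1
  have h2 : ((∑ i ∈ Finset.range N, f (x + i * c)) - N * ∫ t in (0:ℝ)..1, f t) ≤ δ * N := by
    refine (le_abs_self _).trans ?_
    rw [← Real.norm_eq_abs, ← Complex.norm_real]
    push_cast
    exact h1
  linarith

lemma opNorm2_mul (M N) : opNorm2 (M * N) ≤ opNorm2 M * opNorm2 N := by
  unfold opNorm2; rw [map_mul]; exact norm_mul_le _ _

lemma opNorm2_one : opNorm2 1 = 1 := by
  unfold opNorm2; rw [map_one]; exact norm_one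

lemma opNorm2_entry (M : Matrix (Fin 2) (Fin 2) ℂ) (i j) : ‖M i j‖ ≤ opNorm2 M := by
  have h := (Matrix.toEuclideanCLM (𝕜 := ℂ) M).le_opNorm (EuclideanSpace.single j 1)
  rw [EuclideanSpace.norm_single, norm_one, mul_one] at h
  refine le_trans ?_ h
  refine le_trans (le_of_eq ?_) (PiLp.norm_apply_le _ i)
  congr 1
  rw [Matrix.ofLp_toEuclideanCLM]
  simp

lemma continuous_opNorm2 : Continuous opNorm2 := by
  have : Continuous (fun M : Matrix (Fin 2) (Fin 2) ℂ => Matrix.toEuclideanCLM (𝕜 := ℂ) M) :=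
    LinearMap.continuous_of_finiteDimensional
      ((Matrix.toEuclideanCLM (𝕜 := ℂ) (n := Fin 2)).toAlgEquiv.toLinearMap)
  exact this.norm

lemma tProd_zero (V b x z) : tProd V b 0 x z = 1 := by simp [tProd]

lemma tProd_succ_left (V b n x z) :
    tProd V b (n+1) x z = tMat V (x + n * b) z * tProd V b n x z := by
  simp [tProd, List.range_succ]

lemma tProd_add (V b) (n m : ℕ) (x z) :
    tProd V b (n + m) x z = tProd V b n (x + m * b) z * tProd V b m x z := by
  induction n with
  | zero => simp [tProd_zero]
  | succ n ih =>
    rw [show n + 1 + m = (n + m) + 1 by ring, tProd_succ_left, ih, tProd_succ_left, mul_assoc]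
    congr 2
    push_cast; ring

lemma tProd_det (V b n x z) : (tProd V b n x z).det = 1 := by
  induction n with
  | zero => simp [tProd_zero]
  | succ n ih => rw [tProd_succ_left, Matrix.det_mul, ih]; simp [tMat, Matrix.det_fin_two]

lemma opNorm2_pos (V b n x z) : 0 < opNorm2 (tProd V b n x z) := by
  unfold opNorm2
  rw [norm_pos_iff]
  intro h
  have h' : tProd V b n x z = 0 := by
    rw [← map_zero (Matrix.toEuclideanCLM (𝕜 := ℂ) (n := Fin 2))] at h
    exact (Matrix.toEuclideanCLM (𝕜 := ℂ) (n := Fin 2)).injective h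
  have := tProd_det V b n x z
  rw [h'] at this
  simp at this

lemma tProd_continuous {V : ℝ → ℝ} (hV : Continuous V) (b n z) :
    Continuous (fun x => tProd V b n x z) := by
  induction n with
  | zero => simp only [tProd_zero]; exact continuous_const
  | succ n ih =>
    simp only [tProd_succ_left]
    refine Continuous.mul ?_ ih
    refine continuous_matrix fun i j => ?_
    fin_cases i <;> fin_cases j <;> simp [tMat] <;> fun_prop

lemma tProd_periodic {V : ℝ → ℝ} (hV : Function.Periodic V 1) (b n z) :
    Function.Periodic (fun x => tProd V b n x z) 1 := by
  intro x
  simp only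
  induction n with
  | zero => simp only [tProd_zero]
  | succ n ih =>
    simp only [tProd_succ_left, ih]
    congr 1
    unfold tMat
    rw [show x + 1 + n * b = (x + n * b) + 1 by ring, hV]

lemma potV_periodic (α lam : ℝ) : Function.Periodic (potV α lam) 1 := by
  intro x
  unfold potV
  rw [show 2 * π * (x + 1) = 2 * π * x + 2 * π by ring, Real.cos_add_two_pi]

lemma potV_continuous {α : ℝ} (lam : ℝ) (hα : α ∈ Set.Ioo (-1 : ℝ) 1) : Continuous (potV α lam) := by
  unfold potV
  refine Continuous.div (by fun_prop) (by fun_prop) fun x => ?_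
  have h1 := Real.abs_cos_le_one (2 * π * x)
  have h2 : |α| < 1 := abs_lt.2 hα
  have h3 : |α * Real.cos (2 * π * x)| < 1 := by
    rw [abs_mul]; nlinarith [abs_nonneg α, abs_nonneg (Real.cos (2 * π * x))]
  have := (abs_lt.1 h3).2
  linarith

lemma Pdet_zero (V b x E) : Pdet V b 0 x E = 1 := by simp [Pdet]

lemma Pdet_one (V b x E) : Pdet V b 1 x E = E - V x := by simp [Pdet, Pmat]

lemma Pdet_rec (V b) (k : ℕ) (x E) : Pdet V b (k+2) x E =
    (E - V x) * Pdet V b (k+1) (x + b) E - Pdet V b k (x + b + b) E := by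
  unfold Pdet
  rw [Matrix.det_succ_row_zero, Fin.sum_univ_succ, Fin.sum_univ_succ]
  have hz : ∀ i : Fin k, Pmat V b (k+2) x E 0 i.succ.succ = 0 := by
    intro i
    simp [Pmat, Fin.ext_iff]
    omega
  have hs : (Pmat V b (k+2) x E).submatrix Fin.succ (Fin.succAbove 0) = Pmat V b (k+1) (x+b) E := by
    ext i j
    simp only [Matrix.submatrix_apply, Pmat, Fin.zero_succAbove, Fin.succ_inj]
    congr 1
    · congr 2; simp; ring
    · simp
  have hs2 : ((Pmat V b (k+2) x E).submatrix Fin.succ (Fin.succAbove (Fin.succ 0))).det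
      = - (Pmat V b k (x+b+b) E).det := by
    rw [Matrix.det_succ_column_zero, Fin.sum_univ_succ]
    have h0 : ∀ i : Fin k, (Pmat V b (k+2) x E).submatrix Fin.succ (Fin.succAbove (Fin.succ 0)) i.succ 0 = 0 := by
      intro i
      simp [Pmat, Fin.ext_iff, Fin.succAbove]
      omega
    have h1 : (Pmat V b (k+2) x E).submatrix Fin.succ (Fin.succAbove (Fin.succ 0)) 0 0 = -1 := by
      simp [Pmat, Fin.ext_iff, Fin.succAbove]
    have h2 : (((Pmat V b (k+2) x E).submatrix Fin.succ (Fin.succAbove (Fin.succ 0))).submatrix (Fin.succAbove 0) Fin.succ) = Pmat V b k (x+b+b) E := by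
      ext i j
      have e : (Fin.succAbove (Fin.succ (0 : Fin (k+1)))) j.succ = j.succ.succ := by
        rw [Fin.succ_succAbove_succ, Fin.zero_succAbove]
      simp only [Matrix.submatrix_apply, Pmat, Fin.zero_succAbove, e, Fin.succ_inj]
      congr 1
      · congr 2; simp; ring
      · simp
    rw [h1, h2]
    simp only [h0]
    simp
  simp only [hz]
  rw [hs, hs2]
  simp [Pmat, Fin.ext_iff]
  ring

lemma tProd_succ_right (V b) (n : ℕ) (x z) :
    tProd V b (n+1) x z = tProd V b n (x + b) z * tMat V x z := by
  have := tProd_add V b n 1 x z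
  rw [this]
  have h1 : tProd V b 1 x z = tMat V x z := by
    rw [← zero_add 1, tProd_succ_left, tProd_zero]; simp
  rw [h1]; simp

lemma tProd_entries (V b) (k : ℕ) (x E : ℝ) :
    tProd V b (k+1) x E 0 0 = (Pdet V b (k+1) x E : ℝ) ∧
    tProd V b (k+1) x E 0 1 = - (Pdet V b k (x+b) E : ℝ) := by
  induction k generalizing x with
  | zero =>
    rw [tProd_succ_left, tProd_zero, Pdet_zero]
    simp [Pdet_one, tMat]
  | succ k ih =>
    rw [tProd_succ_right, Pdet_rec]
    obtain ⟨h1, h2⟩ := ih (x + b)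
    simp only [Matrix.mul_apply, Fin.sum_univ_two, h1, h2]
    simp [tMat]
    ring

lemma Pdet_le (V b) (k : ℕ) (x E : ℝ) : |Pdet V b (k+1) x E| ≤ opNorm2 (tProd V b (k+1) x E) := by
  have := opNorm2_entry (tProd V b (k+1) x E) 0 0
  rwa [(tProd_entries V b k x E).1, Complex.norm_real] at this

/-- Subadditivity along blocks of length `m`. -/
lemma log_blocks (V b) (m r q : ℕ) (x z) :
    Real.log (opNorm2 (tProd V b (r + q * m) x z)) ≤
      Real.log (opNorm2 (tProd V b r (x + q * (m * b)) z)) +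
      ∑ i ∈ Finset.range q, Real.log (opNorm2 (tProd V b m (x + i * (m * b)) z)) := by
  have hadd : ∀ n l x, Real.log (opNorm2 (tProd V b (n + l) x z)) ≤
      Real.log (opNorm2 (tProd V b n (x + l * b) z)) + Real.log (opNorm2 (tProd V b l x z)) := by
    intro n l x
    rw [← Real.log_mul (opNorm2_pos ..).ne' (opNorm2_pos ..).ne', tProd_add]
    refine Real.log_le_log ?_ (opNorm2_mul _ _)
    rw [← tProd_add]; exact opNorm2_pos ..
  have h2 : ∀ q : ℕ, Real.log (opNorm2 (tProd V b (q * m) x z)) ≤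
      ∑ i ∈ Finset.range q, Real.log (opNorm2 (tProd V b m (x + i * (m * b)) z)) := by
    intro q
    induction q with
    | zero => simp [tProd_zero, opNorm2_one]
    | succ q ih =>
      rw [Finset.sum_range_succ, show (q+1) * m = m + q * m by ring]
      have := hadd m (q*m) x
      rw [show x + ((q * m : ℕ) : ℝ) * b = x + q * (m * b) by push_cast; ring] at this
      linarith
  have := hadd r (q*m) x
  rw [show x + ((q * m : ℕ) : ℝ) * b = x + q * (m * b) by push_cast; ring] at this
  linarith [h2 q]

/-- for every `E` and `ε > 0` there is `K` such that for every `k > K` and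
every `x`, `|P_k(x,E)| < e^{(L(E)+ε)k}`. -/
theorem Pdet_upper_bound (α lam b : ℝ) (hα : α ∈ Set.Ioo (-1 : ℝ) 1)
    (hb : Irrational b) (E : ℝ) (ε : ℝ) (hε : 0 < ε) :
    ∃ K : ℕ, ∀ k : ℕ, K < k → ∀ x : ℝ,
      |Pdet (potV α lam) b k x E| <
        Real.exp ((lyap (potV α lam) b (E : ℂ) + ε) * (k : ℝ)) := by
  set V := potV α lam with hVdef
  have hVc : Continuous V := potV_continuous lam hα
  have hVp : Function.Periodic V 1 := potV_periodic α lam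
  set L := lyap V b (E : ℂ) with hL
  have hlt : lyap V b (E : ℂ) < L + ε / 4 := by linarith
  obtain ⟨m, hm⟩ := exists_lt_of_ciInf_lt hlt
  have hmpos : (0:ℝ) < (m : ℕ) := by exact_mod_cast m.pos
  set g : ℕ → ℝ → ℝ := fun n x => Real.log (opNorm2 (tProd V b n x E)) with hg
  have hgc : ∀ n, Continuous (g n) := fun n =>
    (continuous_opNorm2.comp (tProd_continuous hVc b n E)).log (fun x => (opNorm2_pos ..).ne')
  have hgp : ∀ n, Function.Periodic (g n) 1 := fun n x => by
    have := tProd_periodic hVp b n E x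
    simp only at this
    simp only [hg, this]
  have hint : ∫ t in (0:ℝ)..1, g m t < m * (L + ε/4) := by
    rw [inv_mul_lt_iff₀ hmpos] at hm
    exact hm
  have hmb : Irrational ((m : ℕ) * b) := hb.natCast_mul m.ne_zero
  obtain ⟨N0, hN0⟩ := weyl_real hmb (g m) (hgc m) (hgp m) (m * (ε/4)) (by positivity)
  have hbd : ∀ n, ∃ C : ℝ, ∀ x, g n x ≤ C := by
    intro n
    obtain ⟨C, hC⟩ := (hgp n).isBounded_of_continuous one_ne_zero (hgc n) |>.exists_norm_le
    exact ⟨C, fun x => (le_abs_self _).trans (hC _ ⟨x, rfl⟩)⟩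
  choose C hC using hbd
  set D : ℝ := ∑ r ∈ Finset.range m, |C r| with hD
  have hCD : ∀ r : ℕ, r < (m : ℕ) → C r ≤ D := fun r hr =>
    (le_abs_self _).trans (Finset.single_le_sum (f := fun r => |C r|)
      (fun i _ => abs_nonneg _) (Finset.mem_range.2 hr))
  obtain ⟨K1, hK1⟩ := exists_nat_gt ((D + m * |L + ε/2|) / (ε/2))
  refine ⟨max (N0 * m) K1, fun k hk x => ?_⟩
  have hk1 : N0 * m ≤ k := (le_max_left _ _).trans hk.le
  have hk2 : K1 < k := lt_of_le_of_lt (le_max_right _ _) hk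
  have hPk : |Pdet V b k x E| ≤ opNorm2 (tProd V b k x E) := by
    cases k with
    | zero => omega
    | succ k => exact Pdet_le V b k x E
  refine hPk.trans_lt ?_
  rw [← Real.exp_log (opNorm2_pos V b k x E), Real.exp_lt_exp]
  change g k x < _
  set q := k / m with hq
  set r := k % m with hr
  have hrm : r < (m : ℕ) := Nat.mod_lt _ m.pos
  have hkq : k = r + q * m := by rw [hq, hr, mul_comm]; exact (Nat.mod_add_div k m).symm
  have hqN : N0 ≤ q := (Nat.le_div_iff_mul_le m.pos).2 hk1
  have h1 := log_blocks V b m r q x E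
  rw [← hkq] at h1
  have h2 := hN0 q hqN x
  have h3 : g r (x + q * (m * b)) ≤ D := (hC r _).trans (hCD r hrm)
  have h4 : g k x ≤ D + q * (m * (L + ε/4) + m * (ε/4)) := by
    have : (q:ℝ) * ((∫ t in (0:ℝ)..1, g m t) + m * (ε/4)) ≤ q * (m * (L + ε/4) + m * (ε/4)) := by
      gcongr
    have h1' : g k x ≤ g r (x + q * (m * b)) + ∑ i ∈ Finset.range q, g m (x + i * (m * b)) := h1
    linarith
  have hkR : (k : ℝ) = r + q * m := by exact_mod_cast hkq
  have h5 : -(r * (L + ε/2)) ≤ m * |L + ε/2| := by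
    have a1 : -(L + ε/2) ≤ |L + ε/2| := neg_le_abs _
    have a2 : (r : ℝ) ≤ m := by exact_mod_cast hrm.le
    have a3 : (0:ℝ) ≤ r := by positivity
    nlinarith [abs_nonneg (L + ε/2)]
  have h6 : D + m * |L + ε/2| < ε/2 * k := by
    rw [div_lt_iff₀ (by positivity)] at hK1
    have : (K1 : ℝ) < k := by exact_mod_cast hk2
    nlinarith
  have h7 : (q : ℝ) * (m * (L + ε/4) + m * (ε/4)) = k * (L + ε/2) - r * (L + ε/2) := by
    rw [hkR]; ring
  linarith
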